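/- There exists a reduced word ξ over the alphabet {a, b, a^{-1}, b^{-1}} such that: (i) ξ is 3-aperiodic (contains no 4th power of a nonempty word); (ii) |ξ| ≥ 10000; (iii) ξ satisfies the small cancellation condition C'(1/5); and (iv) ξ = α ξ^{(0)} β with |α| = |β| = 400 where the symmetrized set {α, β} satisfies C'(1/3). -/

import Mathlib

/-- A list is `k`-aperiodic if it contains no factor of the form `y^(k+1)` with `y` nonempty. -/
def KAperiodic {α : Type*} (k : ℕ) (l : List α) : Prop :=
  ∀ x y z : List α, l = x ++ (List.replicate (k + 1) y).flatten ++ z → y = []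

/-- The formal inverse of a word over the alphabet `α × Bool`. -/
def wordInv {α : Type*} (w : List (α × Bool)) : List (α × Bool) :=
  (w.map fun p => (p.1, !p.2)).reverse

/-- The symmetrization of a set of words: all cyclic shifts of the words and of
their inverses. -/
def SymSet {α : Type*} (R : Set (List (α × Bool))) : Set (List (α × Bool)) :=
  {u | ∃ w ∈ R, ∃ i : ℕ, u = w.rotate i ∨ u = (wordInv w).rotate i}

/-- The small cancellation condition `C'(μ)`: every piece (common prefix of two
distinct elements of the symmetrization) of a word `u` in the symmetrization has
length `< μ|u|`. -/
def CPrime {α : Type*} (μ : ℚ) (R : Set (List (α × Bool))) : Prop :=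
  ∀ u ∈ SymSet R, ∀ v ∈ SymSet R, u ≠ v →
    ∀ P : List (α × Bool), P <+: u → P <+: v → (P.length : ℚ) < μ * u.length

/-!
Interleave powers of `a` and `b`: `ξ = a^{±1} b^{±1} a^{±1} b^{±1} …`. Such a word is reduced, and
if the exponents of `b` follow the Thue–Morse sequence, which has no cubes, then `ξ` has no cubes
either, *whatever* the exponents of `a` are: a power of even period would give a power in the
exponents of `b`, and a shift by an odd period exchanges the letters `a^{±1}` with the `b^{±1}`.

The exponents of `a` are thus free for small cancellation. The letters `a⁻¹` serve as marks: they
are so few, and placed such that each window of length `n / 5` (respectively `n / 3`, for the two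
ends) of the cyclic word of length `n` contains two of them, whose difference determines their
position. Hence no such window occurs twice in the cyclic words. Nor does it occur in their
inverses, where most of the letters `a^{±1}` are `a⁻¹`.
-/

section Aperiodic

variable {α : Type*}

/-- The sequence analogue of `KAperiodic`: a factor `y ^ (k + 1)` with `|y| = p` that starts at `x`
amounts to `k * p` coincidences of `s` with its shift by `p`. -/
def IsAperiodicSeq (k : ℕ) (s : ℕ → α) : Prop :=
  ∀ x p, 0 < p → ∃ j < k * p, s (x + j) ≠ s (x + j + p)

theorem IsAperiodicSeq.mono {k l : ℕ} {s : ℕ → α} (hs : IsAperiodicSeq k s) (hkl : k ≤ l) :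
    IsAperiodicSeq l s := fun x p hp =>
  let ⟨j, hj, hne⟩ := hs x p hp
  ⟨j, hj.trans_le (Nat.mul_le_mul_right p hkl), hne⟩

theorem getElem?_flatten_replicate_succ (k : ℕ) (y : List α) {j : ℕ} (hj : j < k * y.length) :
    (List.replicate (k + 1) y).flatten[j]? = (List.replicate (k + 1) y).flatten[j + y.length]? := by
  have hlen : (List.replicate k y).flatten.length = k * y.length := by simp
  calc (List.replicate (k + 1) y).flatten[j]?
      = ((List.replicate k y).flatten ++ y)[j]? := by simp [List.replicate_succ']
    _ = (List.replicate k y).flatten[j]? := List.getElem?_append_left (hlen ▸ hj)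
    _ = (y ++ (List.replicate k y).flatten)[j + y.length]? := by
      rw [List.getElem?_append_right (Nat.le_add_left _ _), Nat.add_sub_cancel]
    _ = _ := by simp [List.replicate_succ]

theorem IsAperiodicSeq.kAperiodic {k : ℕ} {s : ℕ → α} (hs : IsAperiodicSeq k s) (m n : ℕ) :
    KAperiodic k ((List.range' m n).map s) := by
  intro x y z h
  by_contra hy
  obtain ⟨j, hj, hne⟩ := hs (m + x.length) y.length (List.length_pos_iff.2 hy)
  have hlen : n = x.length + ((k + 1) * y.length + z.length) := by
    simpa using congrArg List.length h
  have hpow : ∀ i < (k + 1) * y.length,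
      (List.replicate (k + 1) y).flatten[i]? = some (s (m + x.length + i)) := by
    intro i hi
    have hi' : x.length + i < n := by omega
    calc (List.replicate (k + 1) y).flatten[i]?
        = (x ++ (List.replicate (k + 1) y).flatten ++ z)[x.length + i]? := by
          rw [List.append_assoc, List.getElem?_append_right (Nat.le_add_right _ _),
            Nat.add_sub_cancel_left, List.getElem?_append_left (by simpa using hi)]
      _ = some (s (m + x.length + i)) := by
          rw [← h]
          simp [hi', add_assoc]
  rw [Nat.succ_mul] at hpow
  have hshift := getElem?_flatten_replicate_succ k y hj
  rw [hpow j (by omega), hpow (j + y.length) (by omega), Option.some_inj] at hshift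
  exact hne (hshift.trans (by rw [← add_assoc]))

end Aperiodic

section ThueMorse

/-- The Thue–Morse sequence: the parity of the binary digit sum. -/
def thueMorse (n : ℕ) : Bool := (Nat.digits 2 n).sum.bodd

theorem thueMorse_two_mul (n : ℕ) : thueMorse (2 * n) = thueMorse n := by
  rcases n.eq_zero_or_pos with rfl | hn
  · rfl
  · simp [thueMorse, Nat.digits_def' one_lt_two (Nat.mul_pos two_pos hn)]

theorem thueMorse_two_mul_add_one (n : ℕ) : thueMorse (2 * n + 1) = !thueMorse n := by
  rw [thueMorse, Nat.digits_def' one_lt_two (Nat.succ_pos _)]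
  simp [thueMorse, Nat.mul_add_div]

theorem thueMorse_not_constant (n : ℕ) :
    ¬(thueMorse n = thueMorse (n + 1) ∧ thueMorse (n + 1) = thueMorse (n + 2)) := by
  rintro ⟨h₀, h₁⟩
  obtain ⟨m, rfl | rfl⟩ := n.even_or_odd'
  · simp [thueMorse_two_mul, thueMorse_two_mul_add_one] at h₀
  · rw [show 2 * m + 1 + 1 = 2 * (m + 1) by ring, show 2 * m + 1 + 2 = 2 * (m + 1) + 1 by ring,
      thueMorse_two_mul, thueMorse_two_mul_add_one] at h₁
    simp at h₁

theorem exists_thueMorse_ne_of_odd (x : ℕ) {p : ℕ} (hp : Odd p) :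
    ∃ j < 2 * p, thueMorse (x + j) ≠ thueMorse (x + j + p) := by
  obtain ⟨q, rfl⟩ := hp
  by_contra! h
  have hper : ∀ y, x ≤ y → y < x + 2 * (2 * q + 1) →
      thueMorse y = thueMorse (y + (2 * q + 1)) := fun y hxy hy => by
    simpa [Nat.add_sub_cancel' hxy] using h (y - x) (by omega)
  rcases q.eq_zero_or_pos with rfl | hq
  · exact thueMorse_not_constant x ⟨hper x le_rfl (by omega), hper (x + 1) (by omega) (by omega)⟩
  -- The odd shift carries the pairs `(2 m, 2 m + 1)`, on which the sequence changes, to the pairs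
  -- `(2 m' + 1, 2 m' + 2)`, on which it changes only if it takes equal values at `m'`, `m' + 1`.
  have hpair : ∀ m, x ≤ 2 * m → 2 * m + 1 < x + 2 * (2 * q + 1) →
      thueMorse (m + q) = thueMorse (m + q + 1) := fun m hm hm' => by
    have h₀ := hper (2 * m) hm (by omega)
    have h₁ := hper (2 * m + 1) (by omega) hm'
    rw [show 2 * m + (2 * q + 1) = 2 * (m + q) + 1 by ring, thueMorse_two_mul,
      thueMorse_two_mul_add_one] at h₀
    rw [show 2 * m + 1 + (2 * q + 1) = 2 * (m + q + 1) by ring, thueMorse_two_mul,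
      thueMorse_two_mul_add_one] at h₁
    rw [← h₁, h₀, Bool.not_not]
  obtain ⟨m, hm, hm'⟩ : ∃ m, x ≤ 2 * m ∧ 2 * m ≤ x + 1 := ⟨(x + 1) / 2, by omega, by omega⟩
  have h₁ := hpair (m + 1) (by omega) (by omega)
  rw [add_right_comm m 1 q] at h₁
  exact thueMorse_not_constant (m + q) ⟨hpair m hm (by omega), h₁⟩

theorem isAperiodicSeq_thueMorse : IsAperiodicSeq 2 thueMorse := by
  intro x p hp
  induction p using Nat.strong_induction_on generalizing x with
  | _ p ih =>
    obtain ⟨q, rfl | rfl⟩ := p.even_or_odd'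
    · obtain ⟨j, hj, hne⟩ := ih q (by omega) ((x + 1) / 2) (by omega)
      refine ⟨2 * ((x + 1) / 2 + j) - x, by omega, ?_⟩
      rwa [Nat.add_sub_cancel' (by omega), ← Nat.mul_add, thueMorse_two_mul, thueMorse_two_mul]
    · exact exists_thueMorse_ne_of_odd x ⟨q, rfl⟩

end ThueMorse

section Interleave

/-- The sequence of letters `a^{u 0} b^{s 0} a^{u 1} b^{s 1} …` over `{a, b, a⁻¹, b⁻¹}`, where `a`
and `b` are the generators `false` and `true` and the Boolean exponent `false` stands for `-1`. -/
def interleave (u s : ℕ → Bool) (k : ℕ) : Bool × Bool :=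
  (k.bodd, if k.bodd then s (k / 2) else u (k / 2))

theorem interleave_two_mul (u s : ℕ → Bool) (j : ℕ) : interleave u s (2 * j) = (false, u j) := by
  simp [interleave]

theorem interleave_two_mul_add_one (u s : ℕ → Bool) (j : ℕ) :
    interleave u s (2 * j + 1) = (true, s j) := by
  simp [interleave, Nat.mul_add_div]

theorem interleave_eq_false_false_iff (u s : ℕ → Bool) (k : ℕ) :
    interleave u s k = (false, false) ↔ ∃ j, u j = false ∧ k = 2 * j := by
  obtain ⟨m, rfl | rfl⟩ := k.even_or_odd'
  · simp [interleave_two_mul]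
  · simp only [interleave_two_mul_add_one, Prod.mk.injEq, reduceCtorEq, false_and, false_iff]
    rintro ⟨j, -, hj⟩
    omega

theorem isReduced_map_interleave (u s : ℕ → Bool) (m n : ℕ) :
    FreeGroup.IsReduced ((List.range' m n).map (interleave u s)) := by
  rw [FreeGroup.IsReduced, List.isChain_map]
  refine (List.isChain_range' m n 1).imp ?_
  rintro i _ rfl h
  simp [interleave] at h

theorem IsAperiodicSeq.interleave {k : ℕ} {s : ℕ → Bool} (hs : IsAperiodicSeq k s)
    (u : ℕ → Bool) : IsAperiodicSeq k (interleave u s) := by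
  intro x p hp
  obtain ⟨q, rfl | rfl⟩ := p.even_or_odd'
  · obtain ⟨j, hj, hne⟩ := hs (x / 2) q (by omega)
    refine ⟨2 * (x / 2 + j) + 1 - x, ?_, ?_⟩
    · rw [Nat.mul_left_comm]
      omega
    · rw [Nat.add_sub_cancel' (by omega), add_right_comm, ← Nat.mul_add,
        interleave_two_mul_add_one, interleave_two_mul_add_one]
      simpa using hne
  · have hk : 0 < k := by
      obtain ⟨j, hj, -⟩ := hs 0 1 one_pos
      omega
    refine ⟨0, Nat.mul_pos hk hp, fun h => ?_⟩
    simpa [_root_.interleave] using congrArg Prod.fst h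

end Interleave

section Cyclic

variable {α β : Type*} {n : ℕ}

/-- The word spelled by one period of an `n`-periodic sequence. -/
def periodWord (f : ZMod n → β) : List β := (List.range n).map fun k : ℕ => f k

/-- The `n`-periodic sequence with the period `s m, …, s (m + n - 1)`. -/
def periodize (s : ℕ → β) (m n : ℕ) (x : ZMod n) : β := s (m + x.val)

/-- The letter inverse to a given one. -/
def letterInv (c : α × Bool) : α × Bool := (c.1, !c.2)

theorem letterInv_injective : Function.Injective (letterInv : α × Bool → α × Bool) := by
  rintro ⟨x, b⟩ ⟨y, c⟩ h
  simpa [letterInv] using h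

theorem periodWord_periodize (s : ℕ → β) (m n : ℕ) :
    periodWord (periodize s m n) = (List.range' m n).map s := by
  refine List.ext_getElem (by simp [periodWord]) fun k hk _ => ?_
  have hkn : k < n := by simpa [periodWord] using hk
  simp [periodWord, periodize, ZMod.val_natCast, Nat.mod_eq_of_lt hkn]

theorem length_periodWord (f : ZMod n → β) : (periodWord f).length = n := by
  simp [periodWord]

theorem rotate_periodWord (f : ZMod n → β) (i : ℕ) :
    (periodWord f).rotate i = periodWord fun x => f ((i : ZMod n) + x) := by
  refine List.ext_getElem (by simp [periodWord]) fun k _ _ => ?_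
  simp [periodWord, List.getElem_rotate, add_comm]

theorem wordInv_periodWord (f : ZMod n → α × Bool) :
    wordInv (periodWord f) = periodWord fun x => letterInv (f (-1 - x)) := by
  refine List.ext_getElem (by simp [periodWord, wordInv]) fun k hk _ => ?_
  have hkn : 1 + k ≤ n := by simpa [periodWord, wordInv, Nat.add_comm] using hk
  have hcast : ((n - (1 + k) : ℕ) : ZMod n) = -1 - k := by
    rw [Nat.cast_sub hkn, ZMod.natCast_self, Nat.cast_add, Nat.cast_one]
    ring
  simp [periodWord, wordInv, letterInv, Nat.sub_sub, hcast]

theorem periodWord_prefix_agree {f g : ZMod n → β} {P : List β} (hf : P <+: periodWord f)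
    (hg : P <+: periodWord g) {k : ℕ} (hk : k < P.length) :
    f (k : ZMod n) = g k := by
  have h := (hf.getElem hk).symm.trans (hg.getElem hk)
  simpa [periodWord] using h

theorem mem_symSet_range_periodWord {ι : Type*} {f : ι → ZMod n → α × Bool}
    {u : List (α × Bool)} (hu : u ∈ SymSet (Set.range fun i => periodWord (f i))) :
    ∃ i x, u = periodWord (fun z => f i (x + z)) ∨
      u = periodWord fun z => letterInv (f i (x - z)) := by
  obtain ⟨_, ⟨i, rfl⟩, t, rfl | rfl⟩ := hu
  · exact ⟨i, t, .inl (rotate_periodWord _ _)⟩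
  · refine ⟨i, -1 - t, .inr ?_⟩
    simp only [wordInv_periodWord, rotate_periodWord, sub_sub]

/-- A window shared by two inverses is, read backwards, shared by the words themselves, so no third
condition is needed. -/
theorem cPrime_range_periodWord {ι : Type*} {f : ι → ZMod n → α × Bool} {L : ℕ} {μ : ℚ}
    (hμ : L ≤ ⌈μ * n⌉₊)
    (hsame : ∀ i j x y, (∀ k : ℕ, k < L → f i (x + k) = f j (y + k)) → i = j ∧ x = y)
    (hinv : ∀ i j x y, ¬∀ k : ℕ, k < L → f i (x + k) = letterInv (f j (y - k))) :
    CPrime μ (Set.range fun i => periodWord (f i)) := by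
  have hsame' : ∀ i j x y, (∀ k : ℕ, k < L → f i (x - k) = f j (y - k)) → i = j ∧ x = y := by
    intro i j x y h
    obtain ⟨hij, hxy⟩ := hsame i j (x + 1 - L) (y + 1 - L) fun k hk => by
      have hk' : 1 + k ≤ L := by omega
      have hcast : ((L - (1 + k) : ℕ) : ZMod n) = L - 1 - k := by
        rw [Nat.cast_sub hk', Nat.cast_add, Nat.cast_one, sub_sub]
      convert h (L - (1 + k)) (by omega) using 2 <;> rw [hcast] <;> ring
    exact ⟨hij, by simpa using hxy⟩
  intro u hu v hv huv P hPu hPv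
  by_contra! hP
  obtain ⟨i, x, hu⟩ := mem_symSet_range_periodWord hu
  obtain ⟨j, y, hv⟩ := mem_symSet_range_periodWord hv
  have hL : L ≤ P.length := by
    have hun : u.length = n := by rcases hu with rfl | rfl <;> exact length_periodWord _
    exact hμ.trans (Nat.ceil_le.2 (hun ▸ hP))
  rcases hu with rfl | rfl <;> rcases hv with rfl | rfl <;>
    have agree := fun k (hk : k < L) => periodWord_prefix_agree hPu hPv (hk.trans_le hL)
  · obtain ⟨rfl, rfl⟩ := hsame i j x y agree
    exact huv rfl
  · exact hinv i j x y agree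
  · exact hinv j i y x fun k hk => (agree k hk).symm
  · obtain ⟨rfl, rfl⟩ := hsame' i j x y fun k hk => letterInv_injective (agree k hk)
    exact huv rfl

end Cyclic

section Marks

variable {ι : Type*} {n L : ℕ}

/-- A family of sets of marks on the cycle `ZMod n`, modelled on Golomb rulers: a pair of marks of
the same set at distance less than `L` is determined by its difference (`rigid`), and every window
of length `L` contains such a pair, which `recurrent` demands only of the windows that start right
after a mark. Marks are not at distance `2` or `4` (`separated`). -/
structure IsSpread (L : ℕ) (M : ι → Set (ZMod n)) : Prop where
  nonempty : ∀ i, (M i).Nonempty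
  rigid : ∀ i j, ∀ p ∈ M i, ∀ q ∈ M i, p ≠ q → (q - p).val < L →
    ∀ p' ∈ M j, p' + (q - p) ∈ M j → i = j ∧ p = p'
  separated : ∀ i, ∀ p ∈ M i, p + 2 ∉ M i ∧ p + 4 ∉ M i
  recurrent : ∀ i, ∀ p ∈ M i, ∃ q ∈ M i, ∃ r ∈ M i,
    q ≠ r ∧ (q - (p + 1)).val < L ∧ (r - (p + 1)).val < L

theorem val_sub_succ_le [NeZero n] {x q : ZMod n} (hq : q ≠ x) :
    (q - (x + 1)).val ≤ (q - x).val := by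
  have hpos : 1 ≤ (q - x).val := Nat.one_le_iff_ne_zero.2 (by simpa [sub_eq_zero] using hq)
  have hcast : (((q - x).val - 1 : ℕ) : ZMod n) = q - (x + 1) := by
    rw [Nat.cast_sub hpos, ZMod.natCast_zmod_val]
    push_cast
    ring
  rw [← hcast, ZMod.val_natCast]
  exact (Nat.mod_le _ _).trans (Nat.sub_le _ _)

theorem IsSpread.exists_pair [NeZero n] {M : ι → Set (ZMod n)} (hM : IsSpread L M) (i : ι)
    (x : ZMod n) : ∃ q ∈ M i, ∃ r ∈ M i, q ≠ r ∧ (q - x).val < L ∧ (r - x).val < L := by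
  obtain ⟨p, hp⟩ := hM.nonempty i
  have hwalk : ∀ t : ℕ, ∃ q ∈ M i, ∃ r ∈ M i,
      q ≠ r ∧ (q - (p + 1 + t)).val < L ∧ (r - (p + 1 + t)).val < L := by
    intro t
    induction t with
    | zero => simpa using hM.recurrent i p hp
    | succ t ih =>
      rw [Nat.cast_succ, ← add_assoc]
      by_cases hmark : p + 1 + t ∈ M i
      · exact hM.recurrent i _ hmark
      · obtain ⟨q, hq, r, hr, hqr, hqL, hrL⟩ := ih
        exact ⟨q, hq, r, hr, hqr,
          (val_sub_succ_le (ne_of_mem_of_not_mem hq hmark)).trans_lt hqL,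
          (val_sub_succ_le (ne_of_mem_of_not_mem hr hmark)).trans_lt hrL⟩
  simpa using hwalk (x - (p + 1)).val

theorem IsSpread.eq_of_agree [NeZero n] {M : ι → Set (ZMod n)} (hM : IsSpread L M) {i j : ι}
    {x y : ZMod n} (h : ∀ k : ℕ, k < L → (x + k ∈ M i ↔ y + k ∈ M j)) : i = j ∧ x = y := by
  obtain ⟨k, l, hkl, hlL, hk, hl⟩ :
      ∃ k l : ℕ, k < l ∧ l < min L n ∧ x + k ∈ M i ∧ x + l ∈ M i := by
    obtain ⟨q, hq, r, hr, hqr, hqL, hrL⟩ := hM.exists_pair i x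
    have hne : (q - x).val ≠ (r - x).val := fun he =>
      hqr (sub_left_injective (ZMod.val_injective n he))
    rcases hne.lt_or_gt with hlt | hlt
    · exact ⟨_, _, hlt, lt_min hrL (ZMod.val_lt _), by simpa using hq, by simpa using hr⟩
    · exact ⟨_, _, hlt, lt_min hqL (ZMod.val_lt _), by simpa using hr, by simpa using hq⟩
  rw [lt_min_iff] at hlL
  have hdiff : x + l - (x + k) = ((l - k : ℕ) : ZMod n) := by
    rw [Nat.cast_sub hkl.le]
    ring
  have hval : (x + l - (x + k)).val = l - k := by
    rw [hdiff, ZMod.val_natCast, Nat.mod_eq_of_lt (by omega)]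
  have hne : x + k ≠ x + l := fun he => by
    rw [he, sub_self, ZMod.val_zero] at hval
    omega
  obtain ⟨hij, hxy⟩ := hM.rigid i j _ hk _ hl hne (by omega) (y + k) ((h k (by omega)).1 hk) (by
    rw [show y + k + (x + l - (x + k)) = y + l by ring]
    exact (h l hlL.1).1 hl)
  exact ⟨hij, add_right_cancel hxy⟩

theorem IsSpread.exists_notMem_notMem {M : ι → Set (ZMod n)} (hM : IsSpread L M) (i j : ι)
    (p q : ZMod n) : ∃ k ≤ 2, p + (2 * k : ℕ) ∉ M i ∧ q - (2 * k : ℕ) ∉ M j := by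
  by_contra! h
  have h₀ : p ∉ M i → q ∈ M j := by simpa using h 0
  have h₁ : p + 2 ∉ M i → q - 2 ∈ M j := by simpa using h 1
  have h₂ : p + 4 ∉ M i → q - 4 ∈ M j := by simpa using h 2
  have hp := hM.separated i p
  have hp₂ := hM.separated i (p + 2)
  have hq₂ := hM.separated j (q - 2)
  have hq₄ := hM.separated j (q - 4)
  rw [show p + 2 + 2 = p + 4 by ring] at hp₂
  rw [sub_add_cancel] at hq₂ hq₄
  rw [show q - 4 + 2 = q - 2 by ring] at hq₄
  tauto

/-- Among any three successive letters `a^{±1}` of one of the words at most one is `a⁻¹`, whereas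
in an inverse word at most one is `a`. -/
theorem IsSpread.not_agree_letterInv {M : ι → Set (ZMod n)} (hM : IsSpread L M)
    {f : ι → ZMod n → Bool × Bool} (hmark : ∀ i x, f i x = (false, false) ↔ x ∈ M i)
    (halt : ∀ i x, (f i (x + 1)).1 = !(f i x).1) (hL : 6 ≤ L) (i j : ι) (x y : ZMod n) :
    ¬∀ k : ℕ, k < L → f i (x + k) = letterInv (f j (y - k)) := by
  intro h
  obtain ⟨e, he, hfst⟩ : ∃ e ≤ 1, (f i (x + (e : ℕ))).1 = false := by
    cases hx : (f i x).1
    · exact ⟨0, zero_le_one, by simpa using hx⟩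
    · exact ⟨1, le_rfl, by simp [halt, hx]⟩
  obtain ⟨k, hk, hi, hj⟩ := hM.exists_notMem_notMem i j (x + e) (y - e)
  have hfst_add : ∀ k : ℕ, (f i (x + e + (2 * k : ℕ))).1 = false := fun k => by
    induction k with
    | zero => simpa using hfst
    | succ k ih =>
      rw [Nat.mul_succ, Nat.cast_succ, Nat.cast_succ, ← add_assoc, ← add_assoc, halt, halt,
        Bool.not_not, ih]
  have hagree := h (e + 2 * k) (by omega)
  rw [Nat.cast_add, ← add_assoc, ← sub_sub] at hagree
  rw [← hmark] at hi hj
  have hfst_k := hfst_add k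
  revert hagree hi hj hfst_k
  generalize f i _ = c
  generalize f j _ = d
  revert c d
  decide

theorem IsSpread.cPrime [NeZero n] {M : ι → Set (ZMod n)} (hM : IsSpread L M)
    {f : ι → ZMod n → Bool × Bool} (hmark : ∀ i x, f i x = (false, false) ↔ x ∈ M i)
    (halt : ∀ i x, (f i (x + 1)).1 = !(f i x).1) (hL : 6 ≤ L) {μ : ℚ} (hμ : L ≤ ⌈μ * n⌉₊) :
    CPrime μ (Set.range fun i => periodWord (f i)) :=
  cPrime_range_periodWord hμ
    (fun _ _ _ _ h => hM.eq_of_agree fun k hk => by rw [← hmark, ← hmark, h k hk])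
    (hM.not_agree_letterInv hmark halt hL)

theorem val_sub_eq_mod [NeZero n] (p q : ZMod n) :
    (q - p).val = (q.val + (n - p.val)) % n := by
  rw [← ZMod.val_natCast, Nat.cast_add, Nat.cast_sub p.val_le]
  simp [sub_eq_add_neg]

/-- A criterion that can be evaluated: the difference `q - p` of residues is represented by the
natural number `q + (n - p)`, where `p < n`. -/
theorem isSpread_of_residues [NeZero n] {M : ι → List ℕ} (hlt : ∀ i, ∀ p ∈ M i, p < n)
    (hnonempty : ∀ i, M i ≠ [])
    (hrigid : ∀ i j, ∀ p ∈ M i, ∀ q ∈ M i, p ≠ q → (q + (n - p)) % n < L →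
      ∀ p' ∈ M j, (p' + (q + (n - p))) % n ∈ M j → i = j ∧ p = p')
    (hseparated : ∀ i, ∀ p ∈ M i, (p + 2) % n ∉ M i ∧ (p + 4) % n ∉ M i)
    (hrecurrent : ∀ i, ∀ p ∈ M i, ∃ q ∈ M i, ∃ r ∈ M i,
      q ≠ r ∧ (q + (n - (p + 1))) % n < L ∧ (r + (n - (p + 1))) % n < L) :
    IsSpread L fun i => {x : ZMod n | x.val ∈ M i} where
  nonempty i := by
    obtain ⟨p, hp⟩ := List.exists_mem_of_ne_nil _ (hnonempty i)
    exact ⟨p, by rwa [Set.mem_ofPred_eq, ZMod.val_cast_of_lt (hlt i p hp)]⟩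
  rigid i j p hp q hq hpq hL p' hp' hq' := by
    rw [val_sub_eq_mod] at hL
    rw [Set.mem_ofPred_eq, ZMod.val_add, val_sub_eq_mod, Nat.add_mod_mod] at hq'
    obtain ⟨hij, hval⟩ :=
      hrigid i j _ hp _ hq (fun h => hpq (ZMod.val_injective n h)) hL _ hp' hq'
    exact ⟨hij, ZMod.val_injective n hval⟩
  separated i p hp := by
    have hval (c : ℕ) : (p + c).val = (p.val + c) % n := by
      rw [ZMod.val_add, ZMod.val_natCast, Nat.add_mod_mod]
    have h := hseparated i _ hp
    rw [← hval, ← hval] at h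
    exact_mod_cast h
  recurrent i p hp := by
    have hval (q : ℕ) : ((q : ZMod n) - (p + 1)).val = (q + (n - (p.val + 1))) % n := by
      rw [← ZMod.val_natCast, Nat.cast_add, Nat.cast_sub p.val_lt]
      simp [sub_eq_add_neg]
    obtain ⟨q, hq, r, hr, hqr, hqL, hrL⟩ := hrecurrent i _ hp
    have hq_val := ZMod.val_cast_of_lt (hlt i q hq)
    have hr_val := ZMod.val_cast_of_lt (hlt i r hr)
    refine ⟨q, by rwa [Set.mem_ofPred_eq, hq_val], r, by rwa [Set.mem_ofPred_eq, hr_val],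
      ?_, ?_, ?_⟩
    · exact fun h => hqr (by rw [← hq_val, ← hr_val, h])
    · rwa [hval]
    · rwa [hval]

end Marks

section Word

theorem fst_periodize_interleave_add_one (u s : ℕ → Bool) (m : ℕ) {n : ℕ} [NeZero n]
    (hn : Even n) (x : ZMod n) :
    (periodize (interleave u s) m n (x + 1)).1 = !(periodize (interleave u s) m n x).1 := by
  have hmod : (x + 1).val % 2 = (x.val + 1) % 2 := by
    rw [ZMod.val_add, ZMod.val_one_eq_one_mod, Nat.add_mod_mod, Nat.mod_mod_of_dvd _ hn.two_dvd]
  have hbodd : (x + 1).val.bodd = !x.val.bodd := by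
    rw [Nat.mod_two_of_bodd, Nat.mod_two_of_bodd, Nat.bodd_succ] at hmod
    cases h : (x + 1).val.bodd <;> cases h' : x.val.bodd <;> simp [h, h'] at hmod ⊢
  simp [periodize, interleave, hbodd]

/-- The `j` for which the letter `a` at position `2 j` of `ξ` is inverted. Their differences were
found by computer search; they are crowded near both ends, since the words formed by the first and
the last `400` letters must have spread marks of their own. -/
def invertedIndices : List ℕ :=
  [0, 35, 66, 88, 107, 136, 174,
   810, 1170, 1700, 2090, 2570, 3090, 3500, 4040, 4440,
   4829, 4852, 4872, 4908, 4935, 4967, 4995]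

/-- The letters of the word `ξ` of the theorem, continued to an infinite sequence. -/
def xi : ℕ → Bool × Bool := interleave (fun j => decide (j ∉ invertedIndices)) thueMorse

/-- The positions of the letters `a⁻¹` in the factor of length `n` that starts at `m`, counted
from `m`. -/
def marks (m n : ℕ) : List ℕ :=
  (invertedIndices.filter fun j => m ≤ 2 * j ∧ 2 * j < m + n).map fun j => 2 * j - m

theorem periodize_xi_eq_false_false_iff (m n : ℕ) [NeZero n] (x : ZMod n) :
    periodize xi m n x = (false, false) ↔ x.val ∈ marks m n := by
  have hx := x.val_lt
  simp only [periodize, xi, interleave_eq_false_false_iff, marks, List.mem_map, List.mem_filter,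
    decide_eq_true_eq, decide_eq_false_iff_not, not_not]
  constructor
  · rintro ⟨j, hj, h⟩
    exact ⟨j, ⟨hj, by omega⟩, by omega⟩
  · rintro ⟨j, ⟨hj, hjm⟩, h⟩
    exact ⟨j, hj, by omega⟩

theorem cPrime_range_map_xi {ι : Type*} (m : ι → ℕ) {n L : ℕ} [NeZero n] (hn : Even n)
    (hL : 6 ≤ L) {μ : ℚ} (hμ : L ≤ ⌈μ * n⌉₊)
    (h : IsSpread L fun i => {x : ZMod n | x.val ∈ marks (m i) n}) :
    CPrime μ (Set.range fun i => (List.range' (m i) n).map xi) := by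
  simp only [← periodWord_periodize]
  exact h.cPrime (fun i => periodize_xi_eq_false_false_iff (m i) n)
    (fun i => fst_periodize_interleave_add_one _ _ (m i) hn) hL hμ

theorem isSpread_marks_xi :
    IsSpread 2000 fun _ : Unit => {x : ZMod 10000 | x.val ∈ marks 0 10000} :=
  isSpread_of_residues (by decide +kernel) (by decide +kernel) (by decide +kernel)
    (by decide +kernel) (by decide +kernel)

theorem isSpread_marks_xi_ends :
    IsSpread 134 fun i : Bool => {x : ZMod 400 | x.val ∈ marks (bif i then 9600 else 0) 400} :=
  isSpread_of_residues (by decide +kernel) (by decide +kernel) (by decide +kernel)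
    (by decide +kernel) (by decide +kernel)

theorem cPrime_xi : CPrime (1 / 5) {(List.range' 0 10000).map xi} := by
  simpa using cPrime_range_map_xi (fun _ : Unit => 0) (by decide) (by norm_num)
    (Nat.lt_ceil.2 (by norm_num)) isSpread_marks_xi

theorem cPrime_xi_ends :
    CPrime (1 / 3) {(List.range' 0 400).map xi, (List.range' 9600 400).map xi} := by
  have h := cPrime_range_map_xi (fun i : Bool => bif i then 9600 else 0) (μ := 1 / 3) (by decide)
    (by norm_num) (Nat.lt_ceil.2 (by norm_num)) isSpread_marks_xi_ends
  rwa [Bool.range_eq] at h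

end Word

/-- There is a reduced word `ξ` over `{a, b, a⁻¹, b⁻¹}` (alphabet `Bool × Bool`)
which is 3-aperiodic, of length `≥ 10000`, satisfies `C'(1/5)`, and decomposes as
`ξ = α ξ⁽⁰⁾ β` with `|α| = |β| = 400` and `{α, β}` satisfying `C'(1/3)`. -/
theorem stmt_18 :
    ∃ w : List (Bool × Bool), FreeGroup.reduce w = w ∧
      KAperiodic 3 w ∧ 10000 ≤ w.length ∧ CPrime (1/5) {w} ∧
      ∃ A B C : List (Bool × Bool), w = A ++ C ++ B ∧
        A.length = 400 ∧ B.length = 400 ∧ CPrime (1/3) {A, B} := by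
  have haperiodic : IsAperiodicSeq 3 xi :=
    (isAperiodicSeq_thueMorse.mono (by norm_num)).interleave _
  refine ⟨(List.range' 0 10000).map xi, ?_, haperiodic.kAperiodic 0 10000, by simp, cPrime_xi,
    (List.range' 0 400).map xi, (List.range' 9600 400).map xi, (List.range' 400 9200).map xi,
    ?_, by simp, by simp, cPrime_xi_ends⟩
  · exact (isReduced_map_interleave _ _ 0 10000).reduce_eq
  · rw [← List.map_append, ← List.map_append, List.range'_append_1, List.range'_append_1]
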